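/- arXiv:2106.00807 — 3 statements merged into one kernel-verified Lean document; each statement's English description precedes it below -/
import Mathlib

section
/- Let A be a finite distributive nearlattice. The following are equivalent: (1) the set At(A) of dual atoms has a greatest lower bound in A; (2) there exists a ∈ A such that B(A) = [a); (3) B(A) has a least element c and every b ∈ B(A) has a complement relative to c inside B(A), i.e., some b' ∈ B(A) with b ∨ b' = 1 and b ∧ b' = c (so B(A) is a boolean lattice). -/
/-- In a join-semilattice, any two elements with a common lower bound have a
greatest lower bound. -/
def HasPartialMeets (A : Type*) [SemilatticeSup A] : Prop :=
  ∀ x y : A, (∃ z, z ≤ x ∧ z ≤ y) → ∃ m, IsGLB ({x, y} : Set A) m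

/-- Every principal upset is distributive. -/
def UpsetDistrib (A : Type*) [SemilatticeSup A] : Prop :=
  ∀ a x y z m₁ m₂ m₃ : A, a ≤ x → a ≤ y → a ≤ z →
    IsGLB ({x, y ⊔ z} : Set A) m₁ → IsGLB ({x, y} : Set A) m₂ →
    IsGLB ({x, z} : Set A) m₃ → m₁ = m₂ ⊔ m₃

/-- A dual atom: `a ≠ 1` and `a ≤ x ≤ 1` implies `x = a` or `x = 1`. -/
def DualAtom {A : Type*} [SemilatticeSup A] [OrderTop A] (a : A) : Prop :=
  a ≠ ⊤ ∧ ∀ x, a ≤ x → x = a ∨ x = ⊤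

/-- A boolean element: the principal upset `[a)` is a boolean lattice. -/
def BooleanElt {A : Type*} [SemilatticeSup A] [OrderTop A] (a : A) : Prop :=
  ∀ x, a ≤ x → ∃ y, a ≤ y ∧ x ⊔ y = ⊤ ∧ IsGLB ({x, y} : Set A) a

/-!
A boolean element `b` is the meet of the dual atoms above it: if `z` is a lower bound of these with
`z ≰ b`, the descending chain condition on `[b)` yields some `w ≤ z ⊔ b` covering `b`. This `w` lies
below all dual atoms above `b`, but its complement in `[b)` is one of them. Conversely, let `c` be
the meet of all dual atoms, let `c ≤ x`, and let `y ≥ c` be minimal with `x ⊔ y = ⊤`. A dual atom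
`d` not above `x` has `x ⊔ d = ⊤`, so `x ⊔ (d ⊓ y) = ⊤` by distributivity and `y ≤ d` by minimality;
thus every lower bound of `x` and `y` lies below every dual atom, and `y` is a complement of `x` in
`[c)`. As boolean elements form an upset, each of the three conditions says that there is a least
one.
-/

theorem isGLB_pair_iff {α : Type*} [Preorder α] {x y m : α} :
    IsGLB {x, y} m ↔ m ≤ x ∧ m ≤ y ∧ ∀ z, z ≤ x → z ≤ y → z ≤ m := by
  simp [IsGLB, IsGreatest, mem_upperBounds, and_assoc]

theorem isStronglyAtomic_of_isWF_Ici {α : Type*} [Preorder α]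
    (hwf : ∀ a : α, (Set.Ici a).IsWF) : IsStronglyAtomic α where
  exists_covBy_le_of_lt a b hab := by
    obtain ⟨w, ⟨haw, hwb⟩, hw_min⟩ :=
      ((hwf a).mono fun x (hx : x ∈ Set.Ioc a b) => hx.1.le).exists_minimal ⟨b, hab, le_rfl⟩
    exact ⟨w, ⟨haw, fun x hax hxw => hxw.not_ge (hw_min ⟨hax, hxw.le.trans hwb⟩ hxw.le)⟩, hwb⟩

section Nearlattice

variable {A : Type*} [SemilatticeSup A]

theorem UpsetDistrib.le_of_isGLB_le_of_le_sup (hd : UpsetDistrib A) (hm : HasPartialMeets A)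
    {x y z p : A} (hp : IsGLB {x, y} p) (hpz : p ≤ z) (hx : x ≤ z ⊔ y) : x ≤ z := by
  obtain ⟨hpx, hpy, -⟩ := isGLB_pair_iff.1 hp
  obtain ⟨q, hq⟩ := hm x z ⟨p, hpx, hpz⟩
  have hx_glb : IsGLB {x, z ⊔ y} x := isGLB_pair_iff.2 ⟨le_rfl, hx, fun _ h _ => h⟩
  calc
    x = q ⊔ p := hd p x z y x q p hpx hpz hpy hx_glb hq hp
    _ ≤ z := sup_le (isGLB_pair_iff.1 hq).2.1 hpz

variable [OrderTop A]

theorem UpsetDistrib.sup_eq_top_of_isGLB (hd : UpsetDistrib A) (hm : HasPartialMeets A)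
    {x y z p : A} (hxy : x ⊔ y = ⊤) (hxz : x ⊔ z = ⊤) (hp : IsGLB {y, z} p) : x ⊔ p = ⊤ := by
  have hy : y ≤ x ⊔ p := hd.le_of_isGLB_le_of_le_sup hm hp le_sup_right <| by
    rw [sup_right_comm, hxz, top_sup_eq]
    exact le_top
  exact top_le_iff.1 (hxy ▸ sup_le le_sup_left hy)

theorem BooleanElt.of_le (hm : HasPartialMeets A) (hd : UpsetDistrib A) {a b : A}
    (ha : BooleanElt a) (hab : a ≤ b) : BooleanElt b := by
  intro x hbx
  obtain ⟨y, hay, hxy, hglb⟩ := ha x (hab.trans hbx)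
  obtain ⟨-, -, hglb_le⟩ := isGLB_pair_iff.1 hglb
  refine ⟨y ⊔ b, le_sup_right, by rw [← sup_assoc, hxy, top_sup_eq],
    isGLB_pair_iff.2 ⟨hbx, le_sup_right, fun z hzx hzyb => ?_⟩⟩
  -- Since `z` and `y` may have no common lower bound, `y` is cancelled from `z ⊔ b ≤ b ⊔ y`.
  have hglb' : IsGLB {z ⊔ b, y} a := isGLB_pair_iff.2
    ⟨hab.trans le_sup_right, hay, fun w hw => hglb_le w (hw.trans (sup_le hzx hbx))⟩
  have hzb : z ⊔ b ≤ b :=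
    hd.le_of_isGLB_le_of_le_sup hm hglb' hab (sup_le (sup_comm y b ▸ hzyb) le_sup_left)
  exact le_sup_left.trans hzb

theorem DualAtom.le_or_sup_eq_top {d : A} (hd : DualAtom d) (x : A) : x ≤ d ∨ x ⊔ d = ⊤ :=
  (hd.2 (x ⊔ d) le_sup_right).imp_left sup_eq_right.1

theorem DualAtom.booleanElt {d : A} (hd : DualAtom d) : BooleanElt d := by
  intro x hdx
  rcases hd.2 x hdx with rfl | rfl
  · exact ⟨⊤, le_top, sup_top_eq x, isGLB_pair_iff.2 ⟨le_rfl, le_top, fun _ h _ => h⟩⟩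
  · exact ⟨d, le_rfl, top_sup_eq d, isGLB_pair_iff.2 ⟨le_top, le_rfl, fun _ _ h => h⟩⟩

theorem dualAtom_of_covBy (hm : HasPartialMeets A) (hd : UpsetDistrib A) {b w d : A}
    (hbw : b ⋖ w) (hwd : w ⊔ d = ⊤) (hglb : IsGLB {w, d} b) : DualAtom d := by
  obtain ⟨-, hbd, hglb_le⟩ := isGLB_pair_iff.1 hglb
  refine ⟨?_, fun x hdx => ?_⟩
  · rintro rfl
    exact hbw.lt.not_ge (hglb_le w le_rfl le_top)
  obtain ⟨p, hp⟩ := hm x w ⟨b, hbd.trans hdx, hbw.le⟩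
  obtain ⟨hpx, hpw, hp_le⟩ := isGLB_pair_iff.1 hp
  rcases hbw.eq_or_eq (hp_le b (hbd.trans hdx) hbw.le) hpw with rfl | rfl
  · have hxd : x ≤ d := hd.le_of_isGLB_le_of_le_sup hm hp hbd (by rw [sup_comm, hwd]; exact le_top)
    exact Or.inl (hxd.antisymm hdx)
  · exact Or.inr (top_le_iff.1 (hwd ▸ sup_le hpx hdx))

theorem BooleanElt.isGLB_dualAtom [IsStronglyAtomic A] (hm : HasPartialMeets A)
    (hd : UpsetDistrib A) {b : A} (hb : BooleanElt b) : IsGLB {d | DualAtom d ∧ b ≤ d} b := by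
  refine ⟨fun d h => h.2, fun z hz => ?_⟩
  by_contra hzb
  obtain ⟨w, hbw, hwz⟩ := exists_covBy_le_of_lt (right_lt_sup.2 hzb)
  obtain ⟨d, hbd, hwd, hglb⟩ := hb w hbw.le
  have hd_dual : DualAtom d := dualAtom_of_covBy hm hd hbw hwd hglb
  have hw_le : w ≤ d := hwz.trans (sup_le (hz ⟨hd_dual, hbd⟩) hbd)
  exact hd_dual.1 (sup_eq_right.2 hw_le ▸ hwd)

theorem booleanElt_of_isGLB_dualAtom (hm : HasPartialMeets A) (hd : UpsetDistrib A) {c : A}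
    (hwf : (Set.Ici c).IsWF) (hc : IsGLB {d | DualAtom d} c) : BooleanElt c := by
  intro x hcx
  obtain ⟨y, ⟨hcy, hxy⟩, hy_min⟩ :=
    (hwf.mono fun y (hy : c ≤ y ∧ x ⊔ y = ⊤) => hy.1).exists_minimal ⟨⊤, le_top, sup_top_eq x⟩
  refine ⟨y, hcy, hxy, isGLB_pair_iff.2 ⟨hcx, hcy, fun z hzx hzy => hc.2 fun d hd_dual => ?_⟩⟩
  rcases hd_dual.le_or_sup_eq_top x with hxd | hxd
  · exact hzx.trans hxd
  · have hcd : c ≤ d := hc.1 hd_dual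
    obtain ⟨p, hp⟩ := hm d y ⟨c, hcd, hcy⟩
    obtain ⟨hpd, hpy, hp_le⟩ := isGLB_pair_iff.1 hp
    have hyp : y ≤ p := hy_min ⟨hp_le c hcd hcy, hd.sup_eq_top_of_isGLB hm hxd hxy hp⟩ hpy
    exact hzy.trans (hyp.trans hpd)

theorem isGLB_dualAtom_iff_isLeast_booleanElt (hwf : ∀ a : A, (Set.Ici a).IsWF)
    (hm : HasPartialMeets A) (hd : UpsetDistrib A) {c : A} :
    IsGLB {d | DualAtom d} c ↔ IsLeast {b | BooleanElt b} c := by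
  have := isStronglyAtomic_of_isWF_Ici hwf
  refine ⟨fun hc => ?_, fun hc => ?_⟩
  · exact ⟨booleanElt_of_isGLB_dualAtom hm hd (hwf c) hc,
      fun b hb => (BooleanElt.isGLB_dualAtom hm hd hb).2 fun d h => hc.1 h.1⟩
  · exact ⟨fun d h => hc.2 h.booleanElt,
      fun z hz => (BooleanElt.isGLB_dualAtom hm hd hc.1).2 fun d h => hz h.1⟩

theorem setOf_booleanElt_eq_Ici_iff (hm : HasPartialMeets A) (hd : UpsetDistrib A) {a : A} :
    {b | BooleanElt b} = Set.Ici a ↔ IsLeast {b | BooleanElt b} a :=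
  ⟨fun h => h ▸ isLeast_Ici, fun h => Set.Subset.antisymm h.2 fun _ => BooleanElt.of_le hm hd h.1⟩

theorem exists_booleanElt_compl_of_isLeast (hm : HasPartialMeets A) (hd : UpsetDistrib A) {c b : A}
    (hc : IsLeast {b | BooleanElt b} c) (hb : BooleanElt b) :
    ∃ b', BooleanElt b' ∧ b ⊔ b' = ⊤ ∧ IsGLB {b, b'} c := by
  obtain ⟨b', hcb', hsup, hglb⟩ := hc.1 b (hc.2 hb)
  exact ⟨b', BooleanElt.of_le hm hd hc.1 hcb', hsup, hglb⟩

theorem boolean_elements_boolean_lattice_iff_general (hwf : ∀ a : A, (Set.Ici a).IsWF)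
    (hm : HasPartialMeets A) (hd : UpsetDistrib A) :
    ((∃ c : A, IsGLB {x : A | DualAtom x} c) ↔
        (∃ a : A, {b : A | BooleanElt b} = Set.Ici a)) ∧
    ((∃ a : A, {b : A | BooleanElt b} = Set.Ici a) ↔
        (∃ c : A, BooleanElt c ∧ (∀ b, BooleanElt b → c ≤ b) ∧
          ∀ b, BooleanElt b →
            ∃ b', BooleanElt b' ∧ b ⊔ b' = ⊤ ∧ IsGLB ({b, b'} : Set A) c)) := by
  simp only [isGLB_dualAtom_iff_isLeast_booleanElt hwf hm hd, setOf_booleanElt_eq_Ici_iff hm hd,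
    true_and]
  refine exists_congr fun c => ⟨fun hc => ?_, fun ⟨hc, hc_le, _⟩ => ⟨hc, hc_le⟩⟩
  exact ⟨hc.1, fun b hb => hc.2 hb, fun b => exists_booleanElt_compl_of_isLeast hm hd hc⟩

end Nearlattice

/-- in a finite distributive nearlattice the following are
equivalent: (1) the set of dual atoms has a greatest lower bound; (2) the set of
boolean elements is a principal upset `[a)`; (3) the boolean elements form a
boolean lattice (least element `c` and complements relative to `c`). -/
theorem boolean_elements_boolean_lattice_iff {A : Type*} [SemilatticeSup A]
    [OrderTop A] [Finite A] (hm : HasPartialMeets A) (hd : UpsetDistrib A) :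
    ((∃ c : A, IsGLB {x : A | DualAtom x} c) ↔
        (∃ a : A, {b : A | BooleanElt b} = Set.Ici a)) ∧
    ((∃ a : A, {b : A | BooleanElt b} = Set.Ici a) ↔
        (∃ c : A, BooleanElt c ∧ (∀ b, BooleanElt b → c ≤ b) ∧
          ∀ b, BooleanElt b →
            ∃ b', BooleanElt b' ∧ b ⊔ b' = ⊤ ∧ IsGLB ({b, b'} : Set A) c)) :=
  boolean_elements_boolean_lattice_iff_general (fun _ => Set.IsWF.of_wellFoundedLT _) hm hd
end

section
/- Let A be a finite distributive nearlattice. For a ∈ A let π(a) := ⋀X_a, the greatest lower bound of X_a in A (this meet exists and π(a) is a boolean element; interpret ⋀∅ = 1). Then π : A → B(A) is a surjective N-homomorphism: π(1) = 1; π(a ∨ b) = π(a) ∨ π(b) for all a, b ∈ A; π(a ∧ b) = π(a) ∧ π(b) whenever a ∧ b exists in A; and π(b) = b for every b ∈ B(A), so every boolean element lies in the image of π. -/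
/-- `X_a`: the set of dual atoms above `a`. -/
def Xset {A : Type*} [SemilatticeSup A] [OrderTop A] (a : A) : Set A :=
  {x | DualAtom x ∧ a ≤ x}

/-!
Joining with a fixed element preserves finite meets. Hence a dual atom above `a ∧ b` lies above `a`
or `b`, so that `X_{a ∧ b} = X_a ∪ X_b`, and preservation of meets is a statement about lower bounds
of a union. For joins, `⋀X_a ∨ c` is the meet of the elements `s ∨ c` with `s ∈ X_a`, each of which
is `s` or `1`. The same dichotomy makes the meet of the dual atoms in `X_a` not above `x` a
complement of `x` over `⋀X_a`. Conversely, a boolean element `b` is already `⋀X_b`: if `z` is a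
lower bound of `X_b`, then no dual atom lies above a complement of `z ∨ b` over `b`, so this
complement is `1` and `z ∨ b = b`.
-/

theorem isGLB_union_iff_isGLB_pair {P : Type*} [Preorder P] {S T : Set P} {p q r : P}
    (hp : IsGLB S p) (hq : IsGLB T q) : IsGLB (S ∪ T) r ↔ IsGLB {p, q} r := by
  simp only [IsGLB, lowerBounds_union, lowerBounds_insert, lowerBounds_singleton,
    hp.lowerBounds_eq, hq.lowerBounds_eq]

section FiniteMeets

variable {A : Type*} [SemilatticeSup A]

theorem isGLB_pair_sup_left (hm : HasPartialMeets A) (hd : UpsetDistrib A) {s t m : A}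
    (h : IsGLB {s, t} m) (c : A) : IsGLB {c ⊔ s, c ⊔ t} (c ⊔ m) := by
  have hms : m ≤ s := h.1 (by simp)
  have hmt : m ≤ t := h.1 (by simp)
  -- The computation takes place in `[m)`, which contains `c ⊔ m` but perhaps not `c`.
  set e := c ⊔ m
  have hme : m ≤ e := le_sup_right
  have es : e ⊔ s = c ⊔ s := by rw [sup_assoc, sup_eq_right.2 hms]
  have et : e ⊔ t = c ⊔ t := by rw [sup_assoc, sup_eq_right.2 hmt]
  rw [← es, ← et]
  obtain ⟨u, hu⟩ := hm (e ⊔ s) (e ⊔ t) ⟨m, le_sup_of_le_left hme, le_sup_of_le_left hme⟩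
  obtain ⟨v, hv⟩ := hm (e ⊔ s) t ⟨m, le_sup_of_le_left hme, hmt⟩
  obtain ⟨w, hw⟩ := hm t e ⟨m, hmt, hme⟩
  have absorb : IsGLB {e ⊔ s, e} e :=
    ⟨by simp [lowerBounds], fun z hz => hz (by simp)⟩
  have hue : u = e ⊔ v :=
    hd m (e ⊔ s) e t u e v (le_sup_of_le_left hme) hme hmt hu absorb hv
  have hvw : v = w ⊔ m :=
    hd m t e s v w m hmt hme hms (by rwa [Set.pair_comm]) hw (by rwa [Set.pair_comm])
  have hve : v ≤ e := hvw.trans_le (sup_le (hw.1 (by simp)) hme)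
  rwa [hue, sup_eq_left.2 hve] at hu

variable [OrderTop A]

theorem exists_isGLB_of_finite (hm : HasPartialMeets A) {S : Set A} (hS : S.Finite)
    (hbdd : BddBelow S) : ∃ m, IsGLB S m := by
  obtain ⟨a, ha⟩ := hbdd
  induction S, hS using Set.Finite.induction_on with
  | empty => exact ⟨⊤, isGLB_empty⟩
  | @insert s S _ _ ih =>
    obtain ⟨p, hp⟩ := ih fun x hx => ha (Or.inr hx)
    obtain ⟨m, h⟩ := hm s p ⟨a, ha (Or.inl rfl), hp.2 fun x hx => ha (Or.inr hx)⟩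
    exact ⟨m, (isGLB_union_iff_isGLB_pair isGLB_singleton hp).2 h⟩

theorem isGLB_image_sup_left (hm : HasPartialMeets A) (hd : UpsetDistrib A) {S : Set A}
    (hS : S.Finite) {m : A} (h : IsGLB S m) (c : A) : IsGLB ((c ⊔ ·) '' S) (c ⊔ m) := by
  induction S, hS using Set.Finite.induction_on generalizing m with
  | empty =>
    obtain rfl : m = ⊤ := h.unique isGLB_empty
    simp
  | @insert s S _ hS ih =>
    obtain ⟨p, hp⟩ := exists_isGLB_of_finite hm hS ⟨m, fun x hx => h.1 (Or.inr hx)⟩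
    have hsp : IsGLB {s, p} m := (isGLB_union_iff_isGLB_pair isGLB_singleton hp).1 h
    rw [Set.image_insert_eq]
    exact (isGLB_union_iff_isGLB_pair isGLB_singleton (ih hp)).2
      (isGLB_pair_sup_left hm hd hsp c)

end FiniteMeets

section DualAtoms

variable {A : Type*} [SemilatticeSup A] [OrderTop A]

theorem dualAtom_iff_isCoatom {x : A} : DualAtom x ↔ IsCoatom x :=
  ⟨fun hx => ⟨hx.1, fun y hy => (hx.2 y hy.le).resolve_left hy.ne'⟩,
    fun hx => ⟨hx.1, fun _ hy => (hx.le_iff.1 hy).symm⟩⟩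

theorem DualAtom.sup_eq_top {x c : A} (hx : DualAtom x) (hc : ¬ c ≤ x) : c ⊔ x = ⊤ :=
  (hx.2 (c ⊔ x) le_sup_right).resolve_left fun h => hc (sup_eq_right.1 h)

theorem DualAtom.le_or_le_of_isGLB_le (hm : HasPartialMeets A) (hd : UpsetDistrib A)
    {x a b m : A} (hx : DualAtom x) (h : IsGLB {a, b} m) (hmx : m ≤ x) : a ≤ x ∨ b ≤ x := by
  by_contra! ⟨ha, hb⟩
  have hglb : IsGLB {x ⊔ a, x ⊔ b} (x ⊔ m) := isGLB_pair_sup_left hm hd h x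
  rw [sup_comm x a, sup_comm x b, hx.sup_eq_top ha, hx.sup_eq_top hb, sup_eq_left.2 hmx,
    Set.pair_eq_singleton] at hglb
  exact hx.1 (hglb.unique isGLB_singleton)

theorem xset_eq_union_of_isGLB (hm : HasPartialMeets A) (hd : UpsetDistrib A) {a b m : A}
    (h : IsGLB {a, b} m) : Xset m = Xset a ∪ Xset b := by
  ext x
  constructor
  · rintro ⟨hx, hmx⟩
    exact (hx.le_or_le_of_isGLB_le hm hd h hmx).imp (⟨hx, ·⟩) (⟨hx, ·⟩)
  · rintro (⟨hx, hax⟩ | ⟨hx, hbx⟩)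
    · exact ⟨hx, (h.1 (by simp)).trans hax⟩
    · exact ⟨hx, (h.1 (by simp)).trans hbx⟩

theorem bddBelow_xset (a : A) : BddBelow (Xset a) :=
  ⟨a, fun _ hs => hs.2⟩

theorem le_of_isGLB_xset {a p : A} (hp : IsGLB (Xset a) p) : a ≤ p :=
  hp.2 fun _ hs => hs.2

theorem isGLB_xset_sup (hm : HasPartialMeets A) (hd : UpsetDistrib A) {a b p q : A}
    (hfin : (Xset a).Finite) (hp : IsGLB (Xset a) p) (hq : IsGLB (Xset b) q) :
    IsGLB (Xset (a ⊔ b)) (p ⊔ q) := by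
  constructor
  · rintro s ⟨hs, hab⟩
    exact sup_le (hp.1 ⟨hs, le_sup_left.trans hab⟩) (hq.1 ⟨hs, le_sup_right.trans hab⟩)
  · intro z hz
    rw [sup_comm]
    refine (isGLB_image_sup_left hm hd hfin hp q).2 (Set.forall_mem_image.2 fun s hs => ?_)
    by_cases hqs : q ≤ s
    · have hsab : s ∈ Xset (a ⊔ b) := ⟨hs.1, sup_le hs.2 ((le_of_isGLB_xset hq).trans hqs)⟩
      exact (hz hsab).trans le_sup_right
    · exact le_top.trans_eq (hs.1.sup_eq_top hqs).symm

theorem booleanElt_of_isGLB_dualAtoms (hm : HasPartialMeets A) (hd : UpsetDistrib A) {S : Set A}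
    (hfin : S.Finite) (hS : ∀ s ∈ S, DualAtom s) {p : A} (hp : IsGLB S p) : BooleanElt p := by
  intro x hpx
  let T : Set A := {s ∈ S | ¬ x ≤ s}
  have hTfin : T.Finite := hfin.subset (Set.sep_subset _ _)
  have hpT : p ∈ lowerBounds T := fun s hs => hp.1 hs.1
  obtain ⟨y, hy⟩ := exists_isGLB_of_finite hm hTfin ⟨p, hpT⟩
  have hpy : p ≤ y := hy.2 hpT
  refine ⟨y, hpy, ?_, ?_, ?_⟩
  · refine top_le_iff.1 ((isGLB_image_sup_left hm hd hTfin hy x).2 ?_)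
    exact Set.forall_mem_image.2 fun s hs => ((hS s hs.1).sup_eq_top hs.2).ge
  · rintro w (rfl | rfl)
    exacts [hpx, hpy]
  · intro z hz
    refine hp.2 fun s hs => ?_
    by_cases hxs : x ≤ s
    · exact (hz (Set.mem_insert x {y})).trans hxs
    · exact (hz (Set.mem_insert_of_mem x rfl)).trans (hy.1 ⟨hs, hxs⟩)

theorem BooleanElt.isGLB_xset [IsCoatomic A] {b : A} (hb : BooleanElt b) : IsGLB (Xset b) b := by
  refine ⟨fun _ hs => hs.2, fun z hz => ?_⟩
  obtain ⟨y, hby, htop, hglb⟩ := hb (z ⊔ b) le_sup_right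
  obtain rfl | ⟨d, hd, hyd⟩ := eq_top_or_exists_le_coatom y
  · have hzb : z ⊔ b ≤ b := hglb.2 (by simp [lowerBounds])
    exact le_sup_left.trans hzb
  · have hbd : b ≤ d := hby.trans hyd
    have hzd : z ≤ d := hz ⟨dualAtom_iff_isCoatom.2 hd, hbd⟩
    exact absurd (top_le_iff.1 (htop.ge.trans (sup_le (sup_le hzd hbd) hyd))) hd.1

end DualAtoms

theorem pi_is_onto_N_homomorphism_general {A : Type*} [SemilatticeSup A] [OrderTop A]
    [IsCoatomic A] (hm : HasPartialMeets A) (hd : UpsetDistrib A)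
    (hfin : ∀ a : A, (Xset a).Finite) :
    (∀ a : A, ∃ b : A, IsGLB (Xset a) b) ∧
      ∀ π : A → A, (∀ a : A, IsGLB (Xset a) (π a)) →
        (π ⊤ = ⊤ ∧
          (∀ a b : A, π (a ⊔ b) = π a ⊔ π b) ∧
          (∀ a b m : A, IsGLB ({a, b} : Set A) m →
            IsGLB ({π a, π b} : Set A) (π m)) ∧
          (∀ a : A, BooleanElt (π a)) ∧
          (∀ b : A, BooleanElt b → π b = b)) := by
  refine ⟨fun a => exists_isGLB_of_finite hm (hfin a) (bddBelow_xset a), fun π hπ =>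
    ⟨?top, fun a b => ?sup, fun a b m h => ?inf, fun a => ?boolean, fun b hb => ?fixed⟩⟩
  case top => exact top_le_iff.1 (le_of_isGLB_xset (hπ ⊤))
  case sup => exact (hπ (a ⊔ b)).unique (isGLB_xset_sup hm hd (hfin a) (hπ a) (hπ b))
  case inf =>
    rw [← isGLB_union_iff_isGLB_pair (hπ a) (hπ b), ← xset_eq_union_of_isGLB hm hd h]
    exact hπ m
  case boolean => exact booleanElt_of_isGLB_dualAtoms hm hd (hfin a) (fun _ hs => hs.1) (hπ a)
  case fixed => exact (hπ b).unique hb.isGLB_xset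

/-- in a finite distributive nearlattice, `π(a) = ⋀X_a` is well
defined, and any such map `π` is a surjective N-homomorphism onto the boolean
elements: `π(1) = 1`, `π(a ∨ b) = π(a) ∨ π(b)`, `π(a ∧ b) = π(a) ∧ π(b)`
whenever `a ∧ b` exists, every `π(a)` is boolean, and `π` fixes (hence is onto)
the boolean elements. -/
theorem pi_is_onto_N_homomorphism {A : Type*} [SemilatticeSup A] [OrderTop A]
    [Finite A] (hm : HasPartialMeets A) (hd : UpsetDistrib A) :
    (∀ a : A, ∃ b : A, IsGLB (Xset a) b) ∧
      ∀ π : A → A, (∀ a : A, IsGLB (Xset a) (π a)) →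
        (π ⊤ = ⊤ ∧
          (∀ a b : A, π (a ⊔ b) = π a ⊔ π b) ∧
          (∀ a b m : A, IsGLB ({a, b} : Set A) m →
            IsGLB ({π a, π b} : Set A) (π m)) ∧
          (∀ a : A, BooleanElt (π a)) ∧
          (∀ b : A, BooleanElt b → π b = b)) :=
  pi_is_onto_N_homomorphism_general hm hd fun a => (Xset a).toFinite
end

section
/- Let A be a finite distributive nearlattice, L a bounded distributive lattice, and e : A → L an injective N-homomorphism such that e[A] is finitely meet-dense in L. Then: (1) e[At(A)] = At(L), the set of dual atoms (coatoms) of L; (2) if a is a boolean element of A then e(a) is a boolean element of L, i.e., the interval [e(a), 1_L] is a boolean lattice; (3) if a ∈ C(A) then e(a) is a complemented element of L: there exists w ∈ L with e(a) ∨ w = 1_L and e(a) ∧ w = 0_L. -/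
/-- A complemented element: the filter generated by `[a) ∪ a^⊤` is all of `A`. -/
def ComplElt {A : Type*} [SemilatticeSup A] [OrderTop A] (a : A) : Prop :=
  ∀ x : A, ∃ u v m : A, a ≤ u ∧ a ⊔ v = ⊤ ∧ IsGLB ({u, v} : Set A) m ∧ m ≤ x

/-!
Finite meet-density lets one check on `e[A]` alone any property of elements of `L` that is stable
under binary meets. Having a complement in `[e a, ⊤]` is such a property, and so is lying in the
filter generated by `[e a, ⊤]` and the elements codisjoint from `e a`; for the latter, membership of
`⊥` says that `e a` is complemented. For dual atoms, the elements of `[e a, ⊤]` are finite meets of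
elements of `e[[a, ⊤]]`, while a dual atom of `L` is meet-irreducible and hence lies in `e[A]`.
-/

/-- `v` is a relative complement of `u` in the interval `[c, ⊤]`; that `c` lies below `u` and `v` is
encoded by `u ⊓ v = c`. -/
def IsRelCompl {L : Type*} [Lattice L] [OrderTop L] (c u v : L) : Prop :=
  Codisjoint u v ∧ u ⊓ v = c

/-- An N-homomorphism from a nearlattice to a lattice: a map preserving the greatest element, joins,
and those binary meets that exist. -/
structure IsNearlatticeHom {A L : Type*} [SemilatticeSup A] [OrderTop A] [Lattice L] [OrderTop L]
    (e : A → L) : Prop where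
  map_top : e ⊤ = ⊤
  map_sup : ∀ a b : A, e (a ⊔ b) = e a ⊔ e b
  map_isGLB : ∀ a b m : A, IsGLB {a, b} m → e m = e a ⊓ e b

/-- The range of `e` is finitely meet-dense: every element is the meet of a nonempty finite family
of values of `e`. -/
def IsFinitelyMeetDense {A L : Type*} [SemilatticeInf L] [OrderTop L] (e : A → L) : Prop :=
  ∀ u : L, ∃ s : Finset A, s.Nonempty ∧ u = s.inf e

theorem dualAtom_iff_isCoatom_s13 {A : Type*} [SemilatticeSup A] [OrderTop A] {a : A} :
    DualAtom a ↔ IsCoatom a := by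
  refine ⟨fun ⟨hne, h⟩ => ⟨hne, fun x hax => (h x hax.le).resolve_left hax.ne'⟩, fun h => ?_⟩
  exact ⟨h.ne_top, fun x hax => (h.le_iff.mp hax).symm⟩

theorem booleanElt_iff_exists_isRelCompl {L : Type*} [Lattice L] [OrderTop L] {c : L} :
    BooleanElt c ↔ ∀ u, c ≤ u → ∃ v, IsRelCompl c u v := by
  refine forall₂_congr fun u _ => exists_congr fun v => ?_
  constructor
  · rintro ⟨-, hsup, hglb⟩
    exact ⟨codisjoint_iff.mpr hsup, isGLB_pair.unique hglb⟩
  · rintro ⟨hcod, rfl⟩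
    exact ⟨inf_le_right, hcod.eq_top, isGLB_pair⟩

theorem infIrred_of_isCoatom {L : Type*} [SemilatticeInf L] [OrderTop L] {u : L}
    (hu : IsCoatom u) : InfIrred u := by
  refine ⟨fun hmax => hu.ne_top hmax.eq_top, fun b c hbc => ?_⟩
  by_contra! hne
  have hb : b = ⊤ := (hu.le_iff.mp (hbc ▸ inf_le_left)).resolve_right hne.1
  have hc : c = ⊤ := (hu.le_iff.mp (hbc ▸ inf_le_right)).resolve_right hne.2
  exact hu.ne_top (by rw [← hbc, hb, hc, inf_top_eq])

theorem IsRelCompl.inf_sup {L : Type*} [DistribLattice L] [OrderTop L] {c u₁ u₂ v₁ v₂ : L}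
    (h₁ : IsRelCompl c u₁ v₁) (h₂ : IsRelCompl c u₂ v₂) :
    IsRelCompl c (u₁ ⊓ u₂) (v₁ ⊔ v₂) := by
  refine ⟨(h₁.1.mono_right le_sup_left).inf_left (h₂.1.mono_right le_sup_right), ?_⟩
  have hcu₁ : c ≤ u₁ := h₁.2 ▸ inf_le_left
  have hcu₂ : c ≤ u₂ := h₂.2 ▸ inf_le_left
  calc u₁ ⊓ u₂ ⊓ (v₁ ⊔ v₂) = u₁ ⊓ v₁ ⊓ u₂ ⊔ u₁ ⊓ (u₂ ⊓ v₂) := by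
        rw [inf_sup_left, inf_right_comm, inf_assoc u₁ u₂ v₂]
    _ = c := by rw [h₁.2, h₂.2, inf_eq_left.mpr hcu₂, inf_eq_right.mpr hcu₁, sup_idem]

namespace IsFinitelyMeetDense

theorem induction {A L : Type*} [SemilatticeInf L] [OrderTop L] {e : A → L}
    (hdense : IsFinitelyMeetDense e) {p : L → Prop} (map : ∀ a, p (e a))
    (inf : ∀ u, p u → ∀ v, p v → p (u ⊓ v)) (u : L) : p u := by
  obtain ⟨s, hs, rfl⟩ := hdense u
  rw [← Finset.inf'_eq_inf hs]
  exact Finset.inf'_induction hs e inf fun a _ => map a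

theorem mem_range_of_infIrred {A L : Type*} [SemilatticeInf L] [OrderTop L] {e : A → L}
    (hdense : IsFinitelyMeetDense e) {u : L} (hu : InfIrred u) : u ∈ Set.range e := by
  obtain ⟨s, -, hs⟩ := hdense u
  obtain ⟨a, -, ha⟩ := hu.finset_inf_eq hs.symm
  exact ⟨a, ha⟩

section OrderEmbedding

variable {A L : Type*} [PartialOrder A] [OrderTop A] [SemilatticeInf L] [OrderTop L] {e : A ↪o L}

theorem isCoatom_map (hdense : IsFinitelyMeetDense e) (htop : e ⊤ = ⊤) {a : A}
    (ha : IsCoatom a) : IsCoatom (e a) := by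
  have eq_top_or_eq : ∀ u, e a ≤ u → u = ⊤ ∨ u = e a := by
    refine hdense.induction (fun b hab => ?_) fun u hu v hv huv => ?_
    · rcases ha.le_iff.mp (e.le_iff_le.mp hab) with rfl | rfl
      · exact Or.inl htop
      · exact Or.inr rfl
    · obtain ⟨hau, hav⟩ := le_inf_iff.mp huv
      rcases hu hau with rfl | rfl
      · rw [top_inf_eq]
        exact hv hav
      · exact Or.inr (inf_eq_left.mpr hav)
  refine ⟨fun h => ha.ne_top (e.injective (h.trans htop.symm)), fun u hu => ?_⟩
  exact (eq_top_or_eq u hu.le).resolve_right hu.ne'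

theorem image_setOf_isCoatom (hdense : IsFinitelyMeetDense e) (htop : e ⊤ = ⊤) :
    e '' {a | IsCoatom a} = {u | IsCoatom u} := by
  refine Set.Subset.antisymm (Set.image_subset_iff.mpr fun a ha => hdense.isCoatom_map htop ha) ?_
  intro u hu
  obtain ⟨a, rfl⟩ := hdense.mem_range_of_infIrred (infIrred_of_isCoatom hu)
  exact ⟨a, e.isCoatom_of_map_top_of_image htop hu, rfl⟩

end OrderEmbedding

end IsFinitelyMeetDense

namespace IsNearlatticeHom

section Lattice

variable {A L : Type*} [SemilatticeSup A] [OrderTop A] [Lattice L] [OrderTop L] {e : A → L}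

theorem monotone (he : IsNearlatticeHom e) : Monotone e := fun a b hab => by
  rw [← sup_eq_right, ← he.map_sup, sup_eq_right.mpr hab]

theorem le_iff_le (he : IsNearlatticeHom e) (hinj : Function.Injective e) {a b : A} :
    e a ≤ e b ↔ a ≤ b := by
  rw [← sup_eq_right, ← he.map_sup, hinj.eq_iff, sup_eq_right]

theorem codisjoint_map (he : IsNearlatticeHom e) {a b : A} (hab : a ⊔ b = ⊤) :
    Codisjoint (e a) (e b) := by
  rw [codisjoint_iff, ← he.map_sup, hab, he.map_top]

theorem image_setOf_dualAtom (he : IsNearlatticeHom e) (hinj : Function.Injective e)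
    (hdense : IsFinitelyMeetDense e) : e '' {a | DualAtom a} = {u | DualAtom u} := by
  simp only [dualAtom_iff_isCoatom_s13]
  exact IsFinitelyMeetDense.image_setOf_isCoatom
    (e := OrderEmbedding.ofMapLEIff e fun _ _ => he.le_iff_le hinj) hdense he.map_top

end Lattice

theorem booleanElt_map {A L : Type*} [SemilatticeSup A] [OrderTop A] [DistribLattice L]
    [OrderTop L] {e : A → L} (he : IsNearlatticeHom e) (hdense : IsFinitelyMeetDense e) {a : A}
    (ha : BooleanElt a) : BooleanElt (e a) := by
  rw [booleanElt_iff_exists_isRelCompl]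
  refine hdense.induction (fun b hab => ?_) fun u hu v hv huv => ?_
  · obtain ⟨y, -, hy, hglb⟩ := ha (a ⊔ b) le_sup_left
    have hb : e (a ⊔ b) = e b := by rw [he.map_sup, sup_eq_right.mpr hab]
    exact ⟨e y, hb ▸ he.codisjoint_map hy, by rw [he.map_isGLB _ _ _ hglb, hb]⟩
  · obtain ⟨hau, hav⟩ := le_inf_iff.mp huv
    obtain ⟨u', hu'⟩ := hu hau
    obtain ⟨v', hv'⟩ := hv hav
    exact ⟨u' ⊔ v', hu'.inf_sup hv'⟩

theorem exists_codisjoint_inf_le {A L : Type*} [SemilatticeSup A] [OrderTop A] [DistribLattice L]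
    [OrderTop L] {e : A → L} (he : IsNearlatticeHom e) (hdense : IsFinitelyMeetDense e) {a : A}
    (ha : ComplElt a) : ∀ y, ∃ w, Codisjoint (e a) w ∧ e a ⊓ w ≤ y := by
  refine hdense.induction (fun x => ?_) fun y₁ h₁ y₂ h₂ => ?_
  · obtain ⟨u, v, m, hau, hav, hglb, hmx⟩ := ha x
    refine ⟨e v, he.codisjoint_map hav, ?_⟩
    calc e a ⊓ e v ≤ e u ⊓ e v := inf_le_inf_right _ (he.monotone hau)
      _ = e m := (he.map_isGLB _ _ _ hglb).symm
      _ ≤ e x := he.monotone hmx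
  · obtain ⟨w₁, hcod₁, hle₁⟩ := h₁
    obtain ⟨w₂, hcod₂, hle₂⟩ := h₂
    refine ⟨w₁ ⊓ w₂, hcod₁.inf_right hcod₂, ?_⟩
    rw [inf_inf_distrib_left]
    exact inf_le_inf hle₁ hle₂

theorem isComplemented_map {A L : Type*} [SemilatticeSup A] [OrderTop A] [DistribLattice L]
    [BoundedOrder L] {e : A → L} (he : IsNearlatticeHom e) (hdense : IsFinitelyMeetDense e)
    {a : A} (ha : ComplElt a) : IsComplemented (e a) := by
  obtain ⟨w, hcod, hle⟩ := he.exists_codisjoint_inf_le hdense ha ⊥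
  exact ⟨w, disjoint_iff_inf_le.mpr hle, hcod⟩

end IsNearlatticeHom

theorem free_extension_preserves_atoms_boolean_complemented_general {A L : Type*}
    [SemilatticeSup A] [OrderTop A] [DistribLattice L] [BoundedOrder L]
    {e : A → L} (he : IsNearlatticeHom e) (hinj : Function.Injective e)
    (hdense : IsFinitelyMeetDense e) :
    (e '' {a : A | DualAtom a} = {u : L | DualAtom u}) ∧
      (∀ a : A, BooleanElt a →
        ∀ u : L, e a ≤ u → ∃ v : L, e a ≤ v ∧ u ⊔ v = ⊤ ∧ u ⊓ v = e a) ∧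
      (∀ a : A, ComplElt a → ∃ w : L, e a ⊔ w = ⊤ ∧ e a ⊓ w = ⊥) := by
  refine ⟨he.image_setOf_dualAtom hinj hdense, fun a ha u hu => ?_, fun a ha => ?_⟩
  · obtain ⟨v, hav, hsup, hglb⟩ := he.booleanElt_map hdense ha u hu
    exact ⟨v, hav, hsup, isGLB_pair.unique hglb⟩
  · obtain ⟨w, hw⟩ := he.isComplemented_map hdense ha
    exact ⟨w, hw.sup_eq_top, hw.inf_eq_bot⟩

/-- for a finite distributive nearlattice `A` embedded (via an
injective, finitely meet-dense N-homomorphism `e`) in a bounded distributive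
lattice `L`: (1) `e` maps the dual atoms of `A` onto the dual atoms of `L`;
(2) `e` sends boolean elements to boolean elements; (3) `e` sends complemented
elements to complemented elements of `L`. -/
theorem free_extension_preserves_atoms_boolean_complemented {A L : Type*}
    [SemilatticeSup A] [OrderTop A] [Finite A] [DistribLattice L] [BoundedOrder L]
    (hm : HasPartialMeets A) (hd : UpsetDistrib A)
    (e : A → L) (hinj : Function.Injective e)
    (htop : e ⊤ = ⊤)
    (hsup : ∀ a b : A, e (a ⊔ b) = e a ⊔ e b)
    (hinf : ∀ a b m : A, IsGLB ({a, b} : Set A) m → e m = e a ⊓ e b)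
    (hdense : ∀ u : L, ∃ s : Finset A, s.Nonempty ∧ u = s.inf e) :
    (e '' {a : A | DualAtom a} = {u : L | DualAtom u}) ∧
      (∀ a : A, BooleanElt a →
        ∀ u : L, e a ≤ u → ∃ v : L, e a ≤ v ∧ u ⊔ v = ⊤ ∧ u ⊓ v = e a) ∧
      (∀ a : A, ComplElt a → ∃ w : L, e a ⊔ w = ⊤ ∧ e a ⊓ w = ⊥) :=
  free_extension_preserves_atoms_boolean_complemented_general ⟨htop, hsup, hinf⟩ hinj hdense
end
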